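/- Let V = H²₀(Ω) with norm ‖v‖ = ‖D²v‖_{L²(Ω)}, and G(v) := Γ(v,v) ∈ V* with Γ(v,w,φ) = ∫_Ω Δv (curl w · ∇φ) dx. Then the Fréchet derivative DG(v) = Γ(v,·) + Γ(·,v) satisfies the Lipschitz estimate ‖DG(v) − DG(w)‖_{L(V;V*)} ≤ (2|Ω|^{1/2}/π²) ‖v − w‖ for all v, w ∈ V. -/

import Mathlib

open MeasureTheory

noncomputable section

/-- Partial derivative `∂f/∂xᵢ`. -/
def pd (f : EuclideanSpace ℝ (Fin 2) → ℝ) (i : Fin 2) (x : EuclideanSpace ℝ (Fin 2)) : ℝ :=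
  fderiv ℝ f x (EuclideanSpace.single i 1)

/-- Second partial derivative `∂²f/∂xᵢ∂xⱼ`. -/
def pd2 (f : EuclideanSpace ℝ (Fin 2) → ℝ) (i j : Fin 2) (x : EuclideanSpace ℝ (Fin 2)) : ℝ :=
  fderiv ℝ (fun y => pd f j y) x (EuclideanSpace.single i 1)

/-- Laplacian `Δf`. -/
def lap (f : EuclideanSpace ℝ (Fin 2) → ℝ) (x : EuclideanSpace ℝ (Fin 2)) : ℝ :=
  pd2 f 0 0 x + pd2 f 1 1 x

/-- `|D²f(x)|²` (squared Frobenius norm of the Hessian). -/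
def hess2 (f : EuclideanSpace ℝ (Fin 2) → ℝ) (x : EuclideanSpace ℝ (Fin 2)) : ℝ :=
  ∑ i, ∑ j, (pd2 f i j x) ^ 2

/-- Trilinear form `Γ(v,w,φ) = ∫_Ω Δv (curl w · ∇φ)` with
`curl w = (∂w/∂y, −∂w/∂x)`, so `curl w · ∇φ = ∂w/∂y ∂φ/∂x − ∂w/∂x ∂φ/∂y`. -/
def Gam (Ω : Set (EuclideanSpace ℝ (Fin 2))) (v w φ : EuclideanSpace ℝ (Fin 2) → ℝ) : ℝ :=
  ∫ x in Ω, lap v x * (pd w 1 x * pd φ 0 x - pd w 0 x * pd φ 1 x)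

/-- A smooth function compactly supported in `Ω`, a proxy for membership in `H²₀(Ω)`. -/
def IsTest (Ω : Set (EuclideanSpace ℝ (Fin 2))) (φ : EuclideanSpace ℝ (Fin 2) → ℝ) : Prop :=
  ContDiff ℝ (⊤ : ℕ∞) φ ∧ HasCompactSupport φ ∧ tsupport φ ⊆ Ω

/-!
Knothe's triangular map transports the density `|∇w|⁴` onto a multiple of `(1 + |z|⁴)⁻²`: a monotone
map matches the marginals in `x`, and monotone maps match the densities on corresponding vertical
slices. AM-GM for its Jacobian, integration by parts and Hölder's inequality yield the sharp Sobolev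
inequality `‖f‖₄ ≤ π⁻¹‖∇f‖_{4/3}` for `f = |∇w|`. Since `|∇|∇w|| ≤ |D²w|`, Hölder's inequality on
`Ω` then gives `‖∇w‖₄² ≤ |Ω|^{1/2} π⁻² ‖D²w‖₂²`. Together with `‖Δv‖₂ = ‖D²v‖₂` and Cauchy-Schwarz
this bounds `|Γ(v,w,φ)|` by `|Ω|^{1/2} π⁻² ‖D²v‖₂ ‖D²w‖₂ ‖D²φ‖₂`, and `DG(v) - DG(w)` is
a sum of two such terms with one argument `v - w`.
-/

local notation "ℝ²" => EuclideanSpace ℝ (Fin 2)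

section Holder

variable {α : Type*} [MeasurableSpace α] {μ : Measure α} {f g : α → ℝ}

lemma integral_rpow_mul_rpow_le (hf : Integrable f μ) (hg : Integrable g μ)
    (hf0 : 0 ≤ f) (hg0 : 0 ≤ g) {s t : ℝ} (hs : 0 < s) (ht : 0 < t) (hst : s + t = 1) :
    ∫ x, f x ^ s * g x ^ t ∂μ ≤ (∫ x, f x ∂μ) ^ s * (∫ x, g x ∂μ) ^ t := by
  have memLp_rpow {h : α → ℝ} (hh : Integrable h μ) (hh0 : 0 ≤ h) {r : ℝ} (hr : 0 < r) :
      MemLp (fun x => h x ^ r) (ENNReal.ofReal r⁻¹) μ := by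
    simpa [Real.norm_of_nonneg (hh0 _), ENNReal.toReal_ofReal hr.le, ENNReal.ofReal_inv_of_pos hr]
      using (memLp_one_iff_integrable.2 hh).norm_rpow_div (ENNReal.ofReal r)
  have hölder := integral_mul_le_Lp_mul_Lq_of_nonneg (Real.HolderConjugate.inv_inv hs ht hst)
    (.of_forall fun x => Real.rpow_nonneg (hf0 x) s)
    (.of_forall fun x => Real.rpow_nonneg (hg0 x) t) (memLp_rpow hf hf0 hs) (memLp_rpow hg hg0 ht)
  simpa only [Real.rpow_rpow_inv (hf0 _) hs.ne', Real.rpow_rpow_inv (hg0 _) ht.ne', one_div,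
    inv_inv] using hölder

lemma integral_rpow_le [IsFiniteMeasure μ] (hf : Integrable f μ) (hf0 : 0 ≤ f) {s : ℝ} (hs : 0 < s)
    (hs1 : s < 1) : ∫ x, f x ^ s ∂μ ≤ (∫ x, f x ∂μ) ^ s * μ.real Set.univ ^ (1 - s) := by
  simpa using integral_rpow_mul_rpow_le hf (integrable_const (1 : ℝ)) hf0 zero_le_one hs
    (sub_pos.2 hs1) (add_sub_cancel s 1)

lemma abs_integral_mul_le_sqrt_mul_sqrt (hf : Integrable (fun x => f x ^ 2) μ)
    (hg : Integrable (fun x => g x ^ 2) μ) :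
    |∫ x, f x * g x ∂μ| ≤ √(∫ x, f x ^ 2 ∂μ) * √(∫ x, g x ^ 2 ∂μ) := by
  have hölder := integral_rpow_mul_rpow_le hf hg (fun x => sq_nonneg (f x))
    (fun x => sq_nonneg (g x)) (s := 1 / 2) (t := 1 / 2) (by norm_num) (by norm_num) (by norm_num)
  simp only [← Real.sqrt_eq_rpow, Real.sqrt_sq_eq_abs, ← abs_mul] at hölder
  exact abs_integral_le_integral_abs.trans hölder

lemma intervalIntegral_rpow_mul_rpow_le {f g : ℝ → ℝ} {a b : ℝ} (hab : a ≤ b)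
    (hf : Continuous f) (hg : Continuous g) (hf0 : 0 ≤ f) (hg0 : 0 ≤ g) {s t : ℝ} (hs : 0 < s)
    (ht : 0 < t) (hst : s + t = 1) :
    ∫ x in a..b, f x ^ s * g x ^ t ≤ (∫ x in a..b, f x) ^ s * (∫ x in a..b, g x) ^ t := by
  simp only [intervalIntegral.integral_of_le hab]
  exact integral_rpow_mul_rpow_le hf.integrableOn_Ioc hg.integrableOn_Ioc hf0 hg0 hs ht hst

end Holder

section Transport

lemma exists_orderIso_eq_integral {g : ℝ → ℝ} (hg : Continuous g) {ε : ℝ} (hε : 0 < ε)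
    (hεg : ∀ y, ε ≤ g y) (c : ℝ) :
    ∃ e : ℝ ≃o ℝ, (∀ y, e y = ∫ t in c..y, g t) ∧
      ∀ z, HasDerivAt e.symm (g (e.symm z))⁻¹ z := by
  let C : ℝ → ℝ := fun y => ∫ t in c..y, g t
  have hg0 y : 0 < g y := hε.trans_le (hεg y)
  have hC y : HasDerivAt C (g y) y := hg.integral_hasStrictDerivAt c y |>.hasDerivAt
  have hmono : StrictMono C := strictMono_of_deriv_pos fun y => by
    rw [(hC y).deriv]; exact hg0 y
  have hexpand : Monotone fun y => C y - ε * y :=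
    monotone_of_hasDerivAt_nonneg (fun y => (hC y).sub ((hasDerivAt_id y).const_mul ε))
      fun y => by simpa using hεg y
  have hsurj : Function.Surjective C := by
    refine (continuous_iff_continuousAt.2 fun y => (hC y).continuousAt).surjective ?_ ?_
    · simpa using Filter.tendsto_atTop_add_left_of_le' _ _
        ((Filter.eventually_ge_atTop c).mono fun y hy => hexpand hy)
        (Filter.tendsto_id.const_mul_atTop hε)
    · simpa using Filter.tendsto_atBot_add_left_of_ge' _ _
        ((Filter.eventually_le_atBot c).mono fun y hy => hexpand hy)
        (Filter.tendsto_id.const_mul_atBot hε)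
  let e := StrictMono.orderIsoOfSurjective C hmono hsurj
  exact ⟨e, fun _ => rfl, fun z => .of_local_left_inverse e.symm.continuous.continuousAt
    (hC _) (hg0 _).ne' (.of_forall e.apply_symm_apply)⟩

/-- `T`, with derivative `T'`, is the monotone rearrangement carrying the density `ρ` on `[a, b]` to
the density `G` on `[c, d]`: it maps endpoints to endpoints and satisfies the Jacobian equation
`ρ = (G ∘ T) T'`. -/
structure IsTransport (ρ G : ℝ → ℝ) (a b c d : ℝ) (T T' : ℝ → ℝ) : Prop where
  map_left : T a = c
  map_right : T b = d
  hasDerivAt : ∀ x, HasDerivAt T (T' x) x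
  continuous_deriv : Continuous T'
  deriv_nonneg : ∀ x, 0 ≤ T' x
  density_eq : ∀ x ∈ Set.uIcc a b, ρ x = G (T x) * T' x

variable {ρ G T T' : ℝ → ℝ} {a b c d : ℝ}

lemma exists_isTransport (hcd : c ≤ d) (hρ : Continuous ρ) (hρ0 : ∀ x, 0 ≤ ρ x)
    (hG : ContinuousOn G (Set.Icc c d)) (hG0 : ∀ y ∈ Set.Icc c d, 0 < G y)
    (hmass : ∫ x in a..b, ρ x = ∫ y in c..d, G y) : ∃ T T', IsTransport ρ G a b c d T T' := by
  obtain ⟨z, hz, hGz⟩ := isCompact_Icc.exists_isMinOn (Set.nonempty_Icc.2 hcd) hG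
  let G' : ℝ → ℝ := Set.IccExtend hcd ((Set.Icc c d).domRestrict G)
  have hG' : Continuous G' := (continuousOn_iff_continuous_domRestrict.1 hG).Icc_extend'
  have hG'_eq : Set.EqOn G' G (Set.uIcc c d) := fun y hy =>
    Set.IccExtend_of_mem hcd _ (Set.uIcc_of_le hcd ▸ hy)
  have hG'_le y : G z ≤ G' y := hGz (Set.projIcc c d hcd y).2
  have hG'0 y : 0 < G' y := (hG0 z hz).trans_le (hG'_le y)
  obtain ⟨e, he, he_symm⟩ := exists_orderIso_eq_integral hG' (hG0 z hz) hG'_le c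
  let M : ℝ → ℝ := fun x => ∫ t in a..x, ρ t
  have hM x : HasDerivAt M (ρ x) x := hρ.integral_hasStrictDerivAt a x |>.hasDerivAt
  have hM_mono : Monotone M := monotone_of_hasDerivAt_nonneg hM hρ0
  have hderiv x : HasDerivAt (e.symm ∘ M) ((G' (e.symm (M x)))⁻¹ * ρ x) x :=
    (he_symm _).comp x (hM x)
  have hcont : Continuous (e.symm ∘ M) :=
    continuous_iff_continuousAt.2 fun x => (hderiv x).continuousAt
  have hleft : e.symm (M a) = c := by
    rw [OrderIso.symm_apply_eq, he]; simp [M]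
  have hright : e.symm (M b) = d := by
    rw [OrderIso.symm_apply_eq, he]
    exact hmass.trans (intervalIntegral.integral_congr fun y hy => (hG'_eq hy).symm)
  have hmaps : Set.MapsTo (e.symm ∘ M) (Set.uIcc a b) (Set.uIcc c d) := by
    simpa [hleft, hright] using (e.symm.monotone.comp hM_mono).mapsTo_uIcc (a := a) (b := b)
  refine ⟨e.symm ∘ M, fun x => (G' (e.symm (M x)))⁻¹ * ρ x, hleft, hright, hderiv,
    ((hG'.comp hcont).inv₀ fun x => (hG'0 _).ne').mul hρ,
    fun x => mul_nonneg (inv_nonneg.2 (hG'0 _).le) (hρ0 x), fun x hx => ?_⟩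
  rw [← hG'_eq (hmaps hx)]
  exact (mul_inv_cancel_left₀ (hG'0 _).ne' _).symm

namespace IsTransport

lemma continuous (hT : IsTransport ρ G a b c d T T') : Continuous T :=
  continuous_iff_continuousAt.2 fun x => (hT.hasDerivAt x).continuousAt

lemma integral_comp_mul_deriv (hT : IsTransport ρ G a b c d T T') {k : ℝ → ℝ}
    (hk : Continuous k) : ∫ x in a..b, k (T x) * T' x = ∫ y in c..d, k y := by
  simpa only [hT.map_left, hT.map_right, Function.comp_apply] using
    intervalIntegral.integral_comp_mul_deriv (a := a) (b := b) (fun x _ => hT.hasDerivAt x)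
      hT.continuous_deriv.continuousOn hk

lemma integral_mul_comp (hT : IsTransport ρ G a b c d T T') (hG : Continuous G) {k : ℝ → ℝ}
    (hk : Continuous k) : ∫ x in a..b, ρ x * k (T x) = ∫ y in c..d, G y * k y := by
  rw [← hT.integral_comp_mul_deriv (k := fun y => G y * k y) (by fun_prop)]
  refine intervalIntegral.integral_congr fun x hx => ?_
  simp only [hT.density_eq x hx]
  ring

lemma integral_mul_deriv (hT : IsTransport ρ G a b c d T T') {u u' : ℝ → ℝ}
    (hu : ∀ x, HasDerivAt u (u' x) x) (hu' : Continuous u') (ha : u a = 0) (hb : u b = 0) :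
    ∫ x in a..b, u x * T' x = -∫ x in a..b, u' x * T x := by
  rw [intervalIntegral.integral_mul_deriv_eq_deriv_mul (fun x _ => hu x)
    (fun x _ => hT.hasDerivAt x) (hu'.intervalIntegrable _ _)
    (hT.continuous_deriv.intervalIntegrable _ _), ha, hb]
  ring

end IsTransport

end Transport

section Slice

lemma rpow_div_four_pow_four {z : ℝ} (hz : 0 ≤ z) (r : ℝ) : (z ^ (r / 4)) ^ 4 = z ^ r := by
  rw [← Real.rpow_mul_natCast hz]
  norm_num

lemma neg_add_mul_le_two_mul_rpow {p q x y S J : ℝ} (hJ : 0 ≤ J)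
    (h : (p ^ 2 + q ^ 2) ^ 2 ≤ 16 * S ^ 2 * J ^ 3) :
    -(p * x + q * y) ≤
      2 * (J ^ (3 / 4 : ℝ) * (S ^ 2 * (x ^ 2 + y ^ 2) ^ 2) ^ (1 / 4 : ℝ)) := by
  have hJ4 := rpow_div_four_pow_four hJ 3
  have hS4 := rpow_div_four_pow_four (by positivity : 0 ≤ S ^ 2 * (x ^ 2 + y ^ 2) ^ 2) 1
  rw [Real.rpow_ofNat] at hJ4
  rw [Real.rpow_one] at hS4
  refine (neg_le_abs _).trans (le_of_sq_le_sq (le_of_sq_le_sq ?_ (by positivity)) (by positivity))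
  calc (|p * x + q * y| ^ 2) ^ 2
      ≤ ((p ^ 2 + q ^ 2) * (x ^ 2 + y ^ 2)) ^ 2 := by
        rw [sq_abs]
        gcongr
        linarith [sq_nonneg (p * y - q * x)]
    _ ≤ 16 * S ^ 2 * J ^ 3 * (x ^ 2 + y ^ 2) ^ 2 := by rw [mul_pow]; gcongr
    _ = _ := by rw [← pow_mul, mul_pow, mul_pow, hJ4, hS4]; ring

variable {S Sx Sy J g T T' : ℝ → ℝ} {a b c d κ : ℝ}

lemma IsTransport.two_mul_integral_le (hT : IsTransport (fun y => S y ^ 2)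
    (fun y => κ * g y ^ 2) a b c d T T') (hab : a ≤ b) (hS : Continuous S) (hSy : Continuous Sy)
    (hg : Continuous g) (hS0 : 0 ≤ S) (hg0 : ∀ y, 0 < g y)
    (hderiv : ∀ y, HasDerivAt S (Sy y) y) (hSa : S a = 0) (hSb : S b = 0) (hκ : 0 < κ) (t : ℝ) :
    2 * t * (κ * ∫ y in c..d, g y) ≤
      t ^ 2 * κ * (∫ y in a..b, S y) - ∫ y in a..b, Sy y * T y := by
  have hTc := hT.continuous
  have hT'c := hT.continuous_deriv
  have hint {f : ℝ → ℝ} (hf : Continuous f) : IntervalIntegrable f volume a b :=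
    hf.intervalIntegrable a b
  calc 2 * t * (κ * ∫ y in c..d, g y)
      = ∫ y in a..b, 2 * t * κ * (g (T y) * T' y) := by
        rw [intervalIntegral.integral_const_mul, hT.integral_comp_mul_deriv hg]
        ring
    _ ≤ ∫ y in a..b, (t ^ 2 * κ * S y + S y * T' y) := by
        refine intervalIntegral.integral_mono_on hab (hint (by fun_prop)) (hint (by fun_prop))
          fun y hy => ?_
        have hgy := hg0 (T y)
        have hSy0 : (0 : ℝ) ≤ S y := hS0 y
        have hT'y : T' y = S y ^ 2 / (κ * g (T y) ^ 2) := by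
          rw [hT.density_eq y (Set.uIcc_of_le hab ▸ hy), mul_div_cancel_left₀ _ (by positivity)]
        have : 0 ≤ S y * (t * κ - S y / g (T y)) ^ 2 / κ := by positivity
        refine sub_nonneg.1 (this.trans_eq ?_)
        rw [hT'y]
        field_simp
        ring
    _ = _ := by
        rw [intervalIntegral.integral_add (hint (by fun_prop)) (hint (by fun_prop)),
          intervalIntegral.integral_const_mul, hT.integral_mul_deriv hderiv hSy hSa hSb,
          sub_eq_add_neg]

lemma IsTransport.neg_integral_le (hT : IsTransport (fun y => S y ^ 2)
    (fun y => κ * g y ^ 2) a b c d T T') (hab : a ≤ b) (hS : Continuous S) (hSx : Continuous Sx)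
    (hSy : Continuous Sy) (hJ : Continuous J) (hg : Continuous g) (hJ0 : 0 ≤ J)
    (hbound : ∀ y, (Sx y ^ 2 + Sy y ^ 2) ^ 2 ≤ 16 * S y ^ 2 * J y ^ 3) (s : ℝ) :
    -∫ y in a..b, Sy y * T y ≤ s * (∫ y in a..b, Sx y) +
      2 * ((∫ y in a..b, J y) ^ (3 / 4 : ℝ) *
        (κ * ∫ y in c..d, g y ^ 2 * (s ^ 2 + y ^ 2) ^ 2) ^ (1 / 4 : ℝ)) := by
  have hTc := hT.continuous
  have hint {f : ℝ → ℝ} (hf : Continuous f) : IntervalIntegrable f volume a b :=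
    hf.intervalIntegrable a b
  have hpush : ∫ y in a..b, S y ^ 2 * (s ^ 2 + T y ^ 2) ^ 2 =
      κ * ∫ y in c..d, g y ^ 2 * (s ^ 2 + y ^ 2) ^ 2 := by
    rw [hT.integral_mul_comp (by fun_prop) (k := fun y => (s ^ 2 + y ^ 2) ^ 2) (by fun_prop),
      ← intervalIntegral.integral_const_mul]
    simp only [mul_assoc]
  have hpointwise : -∫ y in a..b, Sy y * T y ≤ s * (∫ y in a..b, Sx y) +
      2 * ∫ y in a..b, J y ^ (3 / 4 : ℝ) * (S y ^ 2 * (s ^ 2 + T y ^ 2) ^ 2) ^ (1 / 4 : ℝ) := by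
    rw [← intervalIntegral.integral_neg, ← intervalIntegral.integral_const_mul,
      ← intervalIntegral.integral_const_mul, ← intervalIntegral.integral_add (hint (by fun_prop))
        (hint (by fun_prop (disch := norm_num)))]
    refine intervalIntegral.integral_mono_on hab (hint (by fun_prop))
      (hint (by fun_prop (disch := norm_num))) fun y _ => ?_
    linarith [neg_add_mul_le_two_mul_rpow (x := s) (y := T y) (hJ0 y) (hbound y)]
  have hölder := intervalIntegral_rpow_mul_rpow_le hab hJ
    (by fun_prop : Continuous fun y => S y ^ 2 * (s ^ 2 + T y ^ 2) ^ 2) hJ0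
    (fun y => by positivity) (s := 3 / 4) (t := 1 / 4) (by norm_num) (by norm_num) (by norm_num)
  rw [hpush] at hölder
  linarith

lemma two_mul_integral_le_of_integral_sq_eq (hab : a ≤ b) (hcd : c ≤ d)
    (hS : Continuous S) (hSx : Continuous Sx) (hSy : Continuous Sy) (hJ : Continuous J)
    (hg : Continuous g) (hS0 : 0 ≤ S) (hJ0 : 0 ≤ J) (hg0 : ∀ y, 0 < g y)
    (hderiv : ∀ y, HasDerivAt S (Sy y) y) (hSa : S a = 0) (hSb : S b = 0)
    (hbound : ∀ y, (Sx y ^ 2 + Sy y ^ 2) ^ 2 ≤ 16 * S y ^ 2 * J y ^ 3)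
    (hκ : 0 ≤ κ) (hmass : ∫ y in a..b, S y ^ 2 = κ * ∫ y in c..d, g y ^ 2) (s t : ℝ) :
    2 * t * (κ * ∫ y in c..d, g y) ≤
      t ^ 2 * κ * (∫ y in a..b, S y) + s * (∫ y in a..b, Sx y) +
        2 * ((∫ y in a..b, J y) ^ (3 / 4 : ℝ) *
          (κ * ∫ y in c..d, g y ^ 2 * (s ^ 2 + y ^ 2) ^ 2) ^ (1 / 4 : ℝ)) := by
  have hS2 : Continuous fun y => S y ^ 2 := by fun_prop
  rcases hκ.eq_or_lt with rfl | hκ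
  · have hSzero : Set.EqOn (fun y => S y ^ 2) 0 (Set.Icc a b) := by
      by_contra hne
      simp only [Set.EqOn, not_forall] at hne
      obtain ⟨y, hy, hSy⟩ := hne
      have hlt : a < b := hab.lt_of_ne fun h => hSy (by simp_all)
      have := intervalIntegral.integral_pos hlt hS2.continuousOn (fun _ _ => sq_nonneg _)
        ⟨y, hy, (sq_nonneg (S y)).lt_of_ne' hSy⟩
      simp_all
    have hSx_zero : ∫ y in a..b, Sx y = 0 := by
      refine intervalIntegral.integral_zero_ae (.of_forall fun y hy => ?_)
      rw [Set.uIoc_of_le hab] at hy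
      have hSy2 : S y ^ 2 = 0 := hSzero (Set.Ioc_subset_Icc_self hy)
      have hle := hbound y
      rw [hSy2, mul_zero, zero_mul] at hle
      have hgrad := (pow_eq_zero_iff two_ne_zero).1 (hle.antisymm (sq_nonneg _))
      exact (pow_eq_zero_iff two_ne_zero).1 (by linarith [sq_nonneg (Sx y), sq_nonneg (Sy y)])
    simp [hSx_zero]
  · obtain ⟨T, T', hT⟩ := exists_isTransport hcd hS2 (fun y => sq_nonneg (S y))
      (by fun_prop : ContinuousOn (fun y => κ * g y ^ 2) _)
      (fun y _ => mul_pos hκ (pow_pos (hg0 y) 2))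
      (by rw [hmass, intervalIntegral.integral_const_mul])
    linarith [hT.two_mul_integral_le hab hS hSy hg hS0 hg0 hderiv hSa hSb hκ t,
      hT.neg_integral_le hab hS hSx hSy hJ hg hJ0 hbound s]

end Slice

section Knothe

lemma hasDerivAt_intervalIntegral_of_continuous {F F' : ℝ → ℝ → ℝ}
    (hF : ∀ x, Continuous (F x)) (hF' : Continuous F'.uncurry)
    (hderiv : ∀ x y, HasDerivAt (F · y) (F' x y) x) (a b x₀ : ℝ) :
    HasDerivAt (fun x => ∫ y in a..b, F x y) (∫ y in a..b, F' x₀ y) x₀ := by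
  have hprimitive : (fun x => ∫ y in a..b, F x y) =
      fun x => (∫ y in a..b, F x₀ y) + ∫ t in x₀..x, ∫ y in a..b, F' t y := by
    funext x
    have hswap : ∫ t in x₀..x, ∫ y in a..b, F' t y = ∫ y in a..b, ∫ t in x₀..x, F' t y :=
      intervalIntegral_intervalIntegral_swap <|
        (hF'.continuousOn.integrableOn_compact (isCompact_uIcc.prod isCompact_uIcc)).mono_set
          (Set.prod_mono Set.uIoc_subset_uIcc Set.uIoc_subset_uIcc)
    have hFTC y : ∫ t in x₀..x, F' t y = F x y - F x₀ y :=
      intervalIntegral.integral_eq_sub_of_hasDerivAt (fun t _ => hderiv t y)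
        (Continuous.intervalIntegrable (by fun_prop) _ _)
    simp only [hswap, hFTC]
    rw [intervalIntegral.integral_sub ((hF x).intervalIntegrable _ _)
      ((hF x₀).intervalIntegrable _ _)]
    ring
  rw [hprimitive]
  have hcont : Continuous fun t => ∫ y in a..b, F' t y := by fun_prop
  exact (hcont.integral_hasStrictDerivAt x₀ x₀).hasDerivAt.const_add _

lemma intervalIntegral_intervalIntegral_nonneg {f : ℝ → ℝ → ℝ} {c d : ℝ} (hcd : c ≤ d)
    (hf : ∀ x y, 0 ≤ f x y) : 0 ≤ ∫ x in c..d, ∫ y in c..d, f x y :=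
  intervalIntegral.integral_nonneg hcd fun x _ =>
    intervalIntegral.integral_nonneg hcd fun y _ => hf x y

lemma mul_pow_four_le_of_sqrt_mul_le {l p q r : ℝ} (hl : 0 < l) (hp : 0 ≤ p) (hq : 0 ≤ q)
    (hr : 0 ≤ r) (h : √l * p ≤ q ^ (3 / 4 : ℝ) * (l * r) ^ (1 / 4 : ℝ)) :
    l * p ^ 4 ≤ q ^ 3 * r := by
  have hpow := pow_le_pow_left₀ (by positivity) h 4
  rw [mul_pow, mul_pow, rpow_div_four_pow_four hq, rpow_div_four_pow_four (by positivity),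
    Real.rpow_ofNat, Real.rpow_one, show √l ^ 4 = (√l ^ 2) ^ 2 by ring, Real.sq_sqrt hl.le] at hpow
  refine le_of_mul_le_mul_left ?_ hl
  linarith

/-- `S ≥ 0` is a `C¹` function of two variables with partial derivatives `Sx` and `Sy`, which
vanishes on the boundary of `[a, b]²` and satisfies `|∇S|⁴ ≤ 16 S² J³`. For `S = f²` the last
condition reads `|∇f|^(4/3) ≤ J`, in a form that makes sense at the zeros of `f`. -/
structure IsGradientBound (S Sx Sy J : ℝ → ℝ → ℝ) (a b : ℝ) : Prop where
  continuous : Continuous S.uncurry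
  continuous_dx : Continuous Sx.uncurry
  continuous_dy : Continuous Sy.uncurry
  continuous_bound : Continuous J.uncurry
  nonneg : ∀ x y, 0 ≤ S x y
  bound_nonneg : ∀ x y, 0 ≤ J x y
  hasDerivAt_dx : ∀ x y, HasDerivAt (S · y) (Sx x y) x
  hasDerivAt_dy : ∀ x y, HasDerivAt (S x) (Sy x y) y
  left : ∀ y, S a y = 0
  right : ∀ y, S b y = 0
  bot : ∀ x, S x a = 0
  top : ∀ x, S x b = 0
  le : ∀ x y, (Sx x y ^ 2 + Sy x y ^ 2) ^ 2 ≤ 16 * S x y ^ 2 * J x y ^ 3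

variable {S Sx Sy J g : ℝ → ℝ → ℝ} {a b c d l : ℝ} {T T' : ℝ → ℝ}

namespace IsGradientBound

lemma slice_le (h : IsGradientBound S Sx Sy J a b) (hab : a ≤ b) (hcd : c ≤ d)
    (hg : Continuous g.uncurry) (hg0 : ∀ ξ η, 0 < g ξ η) (hl : 0 < l) {x ξ τ : ℝ} (hτ : 0 ≤ τ)
    (hmass : ∫ y in a..b, S x y ^ 2 = l * (∫ η in c..d, g ξ η ^ 2) * τ) :
    2 * (√l)⁻¹ * (l * τ * ∫ η in c..d, g ξ η) ≤
      τ * (∫ y in a..b, S x y) + ξ * (∫ y in a..b, Sx x y) +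
        2 * ((∫ y in a..b, J x y) ^ (3 / 4 : ℝ) *
          (l * τ * ∫ η in c..d, g ξ η ^ 2 * (ξ ^ 2 + η ^ 2) ^ 2) ^ (1 / 4 : ℝ)) := by
  have ⟨hS, hSx, hSy, hJ, hS0, hJ0, _, hdy, _, _, hbot, htop, hle⟩ := h
  -- The choice `t = 1 / √l` turns the coefficient of `∫ S` into `τ`. With `τ = T'(x)`, `ξ = T(x)`
  -- the first two terms then cancel on integrating by parts in `x`.
  have hscale : (√l)⁻¹ ^ 2 * (l * τ) = τ := by
    rw [inv_pow, Real.sq_sqrt hl.le, inv_mul_cancel_left₀ hl.ne']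
  simpa only [hscale] using two_mul_integral_le_of_integral_sq_eq hab hcd (by fun_prop)
    (by fun_prop) (by fun_prop) (by fun_prop) (by fun_prop) (hS0 x) (hJ0 x) (hg0 ξ) (hdy x) (hbot x)
    (htop x) (hle x) (mul_nonneg hl.le hτ) (hmass.trans (mul_right_comm ..)) ξ (√l)⁻¹

lemma integral_deriv_mul_integral (h : IsGradientBound S Sx Sy J a b) {ρ G : ℝ → ℝ}
    (hT : IsTransport ρ G a b c d T T') :
    ∫ x in a..b, T' x * (∫ y in a..b, S x y) = -∫ x in a..b, T x * ∫ y in a..b, Sx x y := by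
  have hS := h.continuous
  have hSx := h.continuous_dx
  simpa only [mul_comm] using hT.integral_mul_deriv
    (fun x => hasDerivAt_intervalIntegral_of_continuous (by fun_prop) hSx h.hasDerivAt_dx a b x)
    (by fun_prop) (by simp [h.left]) (by simp [h.right])

lemma sqrt_mul_integral_le (h : IsGradientBound S Sx Sy J a b) (hab : a ≤ b)
    (hcd : c ≤ d) (hg : Continuous g.uncurry) (hg0 : ∀ ξ η, 0 < g ξ η) (hl : 0 < l)
    (hT : IsTransport (fun x => ∫ y in a..b, S x y ^ 2)
      (fun ξ => l * ∫ η in c..d, g ξ η ^ 2) a b c d T T') :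
    √l * (∫ ξ in c..d, ∫ η in c..d, g ξ η) ≤ (∫ x in a..b, ∫ y in a..b, J x y) ^ (3 / 4 : ℝ) *
      (l * ∫ ξ in c..d, ∫ η in c..d, g ξ η ^ 2 * (ξ ^ 2 + η ^ 2) ^ 2) ^ (1 / 4 : ℝ) := by
  have hS := h.continuous
  have hSx := h.continuous_dx
  have hJ := h.continuous_bound
  have hTc := hT.continuous
  have hT'c := hT.continuous_deriv
  have hint {f : ℝ → ℝ} (hf : Continuous f) : IntervalIntegrable f volume a b :=
    hf.intervalIntegrable a b
  have hpush {k : ℝ → ℝ} (hk : Continuous k) :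
      ∫ x in a..b, l * T' x * k (T x) = l * ∫ ξ in c..d, k ξ := by
    rw [← hT.integral_comp_mul_deriv hk, ← intervalIntegral.integral_const_mul]
    simp only [mul_assoc, mul_comm (T' _)]
  have hslices : √l * (∫ ξ in c..d, ∫ η in c..d, g ξ η) ≤
      ∫ x in a..b, (∫ y in a..b, J x y) ^ (3 / 4 : ℝ) *
        (l * T' x * ∫ η in c..d, g (T x) η ^ 2 * (T x ^ 2 + η ^ 2) ^ 2) ^ (1 / 4 : ℝ) := by
    have hmono := intervalIntegral.integral_mono_on hab (hint (by fun_prop))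
      (hint (by fun_prop (disch := norm_num))) fun x hx => h.slice_le hab hcd hg hg0 hl
        (hT.deriv_nonneg x) (hT.density_eq x (Set.uIcc_of_le hab ▸ hx))
    rw [intervalIntegral.integral_const_mul,
      hpush (k := fun ξ => ∫ η in c..d, g ξ η) (by fun_prop),
      intervalIntegral.integral_add (hint (by fun_prop)) (hint (by fun_prop (disch := norm_num))),
      intervalIntegral.integral_add (hint (by fun_prop)) (hint (by fun_prop)),
      intervalIntegral.integral_const_mul, h.integral_deriv_mul_integral hT] at hmono
    have hsqrt : (√l)⁻¹ * l = √l := by rw [inv_mul_eq_div, Real.div_sqrt]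
    linear_combination hmono / 2 - (∫ ξ in c..d, ∫ η in c..d, g ξ η) * hsqrt
  refine hslices.trans ((intervalIntegral_rpow_mul_rpow_le hab (by fun_prop) (by fun_prop)
    ?_ ?_ (by norm_num) (by norm_num) (by norm_num)).trans_eq ?_)
  · exact fun x => intervalIntegral.integral_nonneg hab fun y _ => h.bound_nonneg x y
  · exact fun x => mul_nonneg (mul_nonneg hl.le (hT.deriv_nonneg x))
      (intervalIntegral.integral_nonneg hcd fun η _ => by positivity)
  · rw [hpush (k := fun ξ => ∫ η in c..d, g ξ η ^ 2 * (ξ ^ 2 + η ^ 2) ^ 2) (by fun_prop)]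

lemma integral_sq_mul_integral_pow_four_le (h : IsGradientBound S Sx Sy J a b) (hab : a ≤ b)
    (hcd : c < d) (hg : Continuous g.uncurry) (hg0 : ∀ ξ η, 0 < g ξ η) :
    (∫ x in a..b, ∫ y in a..b, S x y ^ 2) * (∫ ξ in c..d, ∫ η in c..d, g ξ η) ^ 4 ≤
      (∫ x in a..b, ∫ y in a..b, J x y) ^ 3 * ((∫ ξ in c..d, ∫ η in c..d, g ξ η ^ 2) *
        ∫ ξ in c..d, ∫ η in c..d, g ξ η ^ 2 * (ξ ^ 2 + η ^ 2) ^ 2) := by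
  have hS := h.continuous
  have hN := intervalIntegral_intervalIntegral_nonneg hab fun x y => sq_nonneg (S x y)
  have hD := intervalIntegral_intervalIntegral_nonneg hcd.le fun ξ η => (hg0 ξ η).le
  have hJ := intervalIntegral_intervalIntegral_nonneg hab h.bound_nonneg
  have hB := intervalIntegral_intervalIntegral_nonneg (c := c) (d := d)
    (f := fun ξ η => g ξ η ^ 2 * (ξ ^ 2 + η ^ 2) ^ 2) hcd.le fun ξ η => by positivity
  have hG0 ξ : 0 < ∫ η in c..d, g ξ η ^ 2 := intervalIntegral.intervalIntegral_pos_of_pos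
    (Continuous.intervalIntegrable (by fun_prop) _ _) (fun η => pow_pos (hg0 ξ η) 2) hcd
  have hZ : 0 < ∫ ξ in c..d, ∫ η in c..d, g ξ η ^ 2 :=
    intervalIntegral.intervalIntegral_pos_of_pos
      (Continuous.intervalIntegrable (by fun_prop) _ _) hG0 hcd
  rcases hN.eq_or_lt with hN | hN
  · rw [← hN, zero_mul]
    positivity
  set N := ∫ x in a..b, ∫ y in a..b, S x y ^ 2
  set Z := ∫ ξ in c..d, ∫ η in c..d, g ξ η ^ 2 with hZ_def
  have hl : 0 < N / Z := div_pos hN hZ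
  obtain ⟨T, T', hT⟩ := exists_isTransport (ρ := fun x => ∫ y in a..b, S x y ^ 2)
    (G := fun ξ => N / Z * ∫ η in c..d, g ξ η ^ 2) (a := a) (b := b) hcd.le (by fun_prop)
    (fun x => intervalIntegral.integral_nonneg hab fun y _ => sq_nonneg (S x y))
    (Continuous.continuousOn (by fun_prop)) (fun ξ _ => mul_pos hl (hG0 ξ))
    (by rw [intervalIntegral.integral_const_mul, ← hZ_def, div_mul_cancel₀ _ hZ.ne'])
  have hpow := mul_pow_four_le_of_sqrt_mul_le hl hD hJ hB
    (h.sqrt_mul_integral_le hab hcd.le hg hg0 hl hT)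
  rw [div_mul_eq_mul_div, div_le_iff₀ hZ] at hpow
  linarith

end IsGradientBound

end Knothe

section Plane

open Filter Topology

variable {f g S J : ℝ² → ℝ}

lemma continuous_vec2 : Continuous fun p : ℝ × ℝ => (!₂[p.1, p.2] : ℝ²) := by
  refine (PiLp.continuous_toLp 2 _).comp (continuous_pi fun i => ?_)
  fin_cases i
  · exact continuous_fst
  · exact continuous_snd

lemma hasDerivAt_vec2_fst {x y : ℝ} (hf : DifferentiableAt ℝ f !₂[x, y]) :
    HasDerivAt (fun t => f !₂[t, y]) (pd f 0 !₂[x, y]) x := by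
  have hline : (fun t : ℝ => (!₂[t, y] : ℝ²)) =
      fun t => !₂[0, y] + t • EuclideanSpace.single 0 1 := by
    ext t i
    fin_cases i <;> simp
  refine hf.hasFDerivAt.comp_hasDerivAt x (f := fun t => !₂[t, y]) ?_
  rw [hline]
  simpa using ((hasDerivAt_id x).smul_const (EuclideanSpace.single (0 : Fin 2) 1)).const_add
    (!₂[0, y] : ℝ²)

lemma hasDerivAt_vec2_snd {x y : ℝ} (hf : DifferentiableAt ℝ f !₂[x, y]) :
    HasDerivAt (fun t => f !₂[x, t]) (pd f 1 !₂[x, y]) y := by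
  have hline : (fun t : ℝ => (!₂[x, t] : ℝ²)) =
      fun t => !₂[x, 0] + t • EuclideanSpace.single 1 1 := by
    ext t i
    fin_cases i <;> simp
  refine hf.hasFDerivAt.comp_hasDerivAt y (f := fun t => !₂[x, t]) ?_
  rw [hline]
  simpa using ((hasDerivAt_id y).smul_const (EuclideanSpace.single (1 : Fin 2) 1)).const_add
    (!₂[x, 0] : ℝ²)

lemma norm_vec2_pow_four (x y : ℝ) : ‖(!₂[x, y] : ℝ²)‖ ^ 4 = (x ^ 2 + y ^ 2) ^ 2 := by
  rw [show 4 = 2 * 2 from rfl, pow_mul, EuclideanSpace.real_norm_sq_eq, Fin.sum_univ_two]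
  rfl

lemma tendsto_intervalIntegral_intervalIntegral (hf : Integrable f) :
    Tendsto (fun R => ∫ x in -R..R, ∫ y in -R..R, f !₂[x, y]) atTop (𝓝 (∫ z, f z)) := by
  have hvec := (EuclideanSpace.volume_preserving_symm_measurableEquiv_toLp (Fin 2)).symm.comp
    (volume_preserving_finTwoArrow ℝ).symm
  have hemb := (MeasurableEquiv.toLp 2 (Fin 2 → ℝ)).measurableEmbedding.comp
    (MeasurableEquiv.finTwoArrow (α := ℝ)).symm.measurableEmbedding
  have hint : Integrable fun p : ℝ × ℝ => f !₂[p.1, p.2] := (hvec.integrable_comp_emb hemb).2 hf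
  rw [← hvec.integral_comp hemb f]
  refine ((aecover_closedBall (x := (0 : ℝ × ℝ)) tendsto_id).integral_tendsto_of_countably_generated
    hint).congr' ?_
  filter_upwards [eventually_ge_atTop 0] with R hR
  have hball : Metric.closedBall (0 : ℝ × ℝ) R = Set.Icc (-R) R ×ˢ Set.Icc (-R) R := by
    rw [← Prod.mk_zero_zero, ← closedBall_prod_same, Real.closedBall_eq_Icc, zero_sub, zero_add]
  rw [id, hball, Measure.volume_eq_prod, setIntegral_prod _ hint.integrableOn]
  simp only [intervalIntegral.integral_of_le (neg_le_self hR), integral_Icc_eq_integral_Ioc]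

lemma isGradientBound_vec2 (hS : ContDiff ℝ 1 S) (hS0 : ∀ z, 0 ≤ S z) (hJ : Continuous J)
    (hJ0 : ∀ z, 0 ≤ J z) (hle : ∀ z, (pd S 0 z ^ 2 + pd S 1 z ^ 2) ^ 2 ≤ 16 * S z ^ 2 * J z ^ 3)
    {R : ℝ} (hR : ∀ z ∈ tsupport S, ‖z‖ < |R|) :
    IsGradientBound (fun x y => S !₂[x, y]) (fun x y => pd S 0 !₂[x, y])
      (fun x y => pd S 1 !₂[x, y]) (fun x y => J !₂[x, y]) (-R) R := by
  have hpd i : Continuous (pd S i) := (hS.continuous_fderiv one_ne_zero).clm_apply continuous_const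
  have hdiff z : DifferentiableAt ℝ S z := hS.differentiable one_ne_zero z
  have hvanish (z : ℝ²) (i : Fin 2) (hz : |z i| = |R|) : S z = 0 :=
    image_eq_zero_of_notMem_tsupport fun hmem =>
      ((PiLp.norm_apply_le z i).trans_lt (hR z hmem)).ne hz
  exact
    { continuous := hS.continuous.comp continuous_vec2
      continuous_dx := (hpd 0).comp continuous_vec2
      continuous_dy := (hpd 1).comp continuous_vec2
      continuous_bound := hJ.comp continuous_vec2
      nonneg := fun _ _ => hS0 _
      bound_nonneg := fun _ _ => hJ0 _
      hasDerivAt_dx := fun _ _ => hasDerivAt_vec2_fst (hdiff _)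
      hasDerivAt_dy := fun _ _ => hasDerivAt_vec2_snd (hdiff _)
      left := fun y => hvanish _ 0 (abs_neg R)
      right := fun y => hvanish _ 0 rfl
      bot := fun x => hvanish _ 1 (abs_neg R)
      top := fun x => hvanish _ 1 rfl
      le := fun x y => hle _ }

lemma integral_sq_mul_integral_pow_four_le_of_integrable (hS : ContDiff ℝ 1 S)
    (hSc : HasCompactSupport S) (hS0 : ∀ z, 0 ≤ S z) (hJ : Continuous J) (hJ0 : ∀ z, 0 ≤ J z)
    (hJint : Integrable J)
    (hle : ∀ z, (pd S 0 z ^ 2 + pd S 1 z ^ 2) ^ 2 ≤ 16 * S z ^ 2 * J z ^ 3)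
    (hg : Continuous g) (hg0 : ∀ z, 0 < g z) (hgint : Integrable g)
    (hg2 : Integrable fun z => g z ^ 2) (hg4 : Integrable fun z => g z ^ 2 * ‖z‖ ^ 4) :
    (∫ z, S z ^ 2) * (∫ z, g z) ^ 4 ≤
      (∫ z, J z) ^ 3 * ((∫ z, g z ^ 2) * ∫ z, g z ^ 2 * ‖z‖ ^ 4) := by
  have hS2 : Integrable fun z => S z ^ 2 := by
    simp only [sq]
    exact (hS.continuous.mul hS.continuous).integrable_of_hasCompactSupport hSc.mul_right
  obtain ⟨C, hC⟩ := hSc.isCompact.isBounded.exists_norm_le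
  have hlim {k : ℝ² → ℝ} (hk : Integrable k) := tendsto_intervalIntegral_intervalIntegral hk
  refine le_of_tendsto_of_tendsto ((hlim hS2).mul ((hlim hgint).pow 4))
    (((hlim hJint).pow 3).mul ((hlim hg2).mul (hlim hg4))) ?_
  filter_upwards [eventually_gt_atTop 0, eventually_gt_atTop C] with R hR hCR
  have hbound := isGradientBound_vec2 hS hS0 hJ hJ0 hle fun z hz =>
    ((hC z hz).trans_lt hCR).trans_le (le_abs_self R)
  have hsquare := hbound.integral_sq_mul_integral_pow_four_le (neg_le_self hR.le)
    (neg_lt_self hR) (g := fun x y => g !₂[x, y]) (hg.comp continuous_vec2) fun _ _ => hg0 _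
  simpa only [norm_vec2_pow_four] using hsquare

end Plane

section Bubble

open Filter Topology

/-- The square of the Talenti extremal `(1 + |z|⁴)^(-1/2)` of the Sobolev inequality
`‖f‖₄ ≤ π⁻¹‖∇f‖_{4/3}`; `bubble ^ 2` serves as the target density of the transport. -/
def bubble (z : ℝ²) : ℝ := (1 + ‖z‖ ^ 4)⁻¹

lemma continuous_bubble : Continuous bubble := by
  unfold bubble
  exact Continuous.inv₀ (by fun_prop) fun z => by positivity

lemma bubble_pos (z : ℝ²) : 0 < bubble z := by
  unfold bubble
  positivity

lemma bubble_sq_add (z : ℝ²) : bubble z ^ 2 + bubble z ^ 2 * ‖z‖ ^ 4 = bubble z := by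
  have : 1 + ‖z‖ ^ 4 ≠ 0 := by positivity
  unfold bubble
  field_simp

lemma integrableOn_Ioi_mul_inv_one_add_pow_four :
    IntegrableOn (fun r : ℝ => r * (1 + r ^ 4)⁻¹) (Set.Ioi 0) ∧
      ∫ r in Set.Ioi (0 : ℝ), r * (1 + r ^ 4)⁻¹ = Real.pi / 4 := by
  have hderiv (r : ℝ) (_ : r ∈ Set.Ici 0) :
      HasDerivAt (fun r : ℝ => Real.arctan (r ^ 2) / 2) (r * (1 + r ^ 4)⁻¹) r := by
    refine ((hasDerivAt_pow 2 r).arctan.div_const 2).congr_deriv ?_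
    rw [← pow_mul]
    simp only [Nat.add_one_sub_one, Nat.cast_ofNat, pow_one]
    ring
  have hnonneg (r : ℝ) (hr : r ∈ Set.Ioi 0) : 0 ≤ r * (1 + r ^ 4)⁻¹ :=
    mul_nonneg (le_of_lt hr) (by positivity)
  have hlim : Tendsto (fun r : ℝ => Real.arctan (r ^ 2) / 2) atTop (𝓝 (Real.pi / 2 / 2)) :=
    ((Real.tendsto_arctan_atTop.mono_right nhdsWithin_le_nhds).comp
      (tendsto_pow_atTop two_ne_zero)).div_const 2
  refine ⟨integrableOn_Ioi_deriv_of_nonneg' hderiv hnonneg hlim, ?_⟩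
  rw [integral_Ioi_of_hasDerivAt_of_nonneg' hderiv hnonneg hlim, zero_pow two_ne_zero,
    Real.arctan_zero]
  ring

lemma integrable_bubble : Integrable bubble := by
  refine (integrable_fun_norm_addHaar volume (f := fun r : ℝ => (1 + r ^ 4)⁻¹)).2 ?_
  simpa using integrableOn_Ioi_mul_inv_one_add_pow_four.1

lemma integral_bubble : ∫ z, bubble z = Real.pi ^ 2 / 2 := by
  simp only [bubble]
  rw [integral_fun_norm_addHaar volume fun r : ℝ => (1 + r ^ 4)⁻¹]
  simp only [finrank_euclideanSpace_fin, Nat.add_one_sub_one, pow_one, smul_eq_mul,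
    integrableOn_Ioi_mul_inv_one_add_pow_four.2, Measure.real, EuclideanSpace.volume_ball_fin_two]
  rw [ENNReal.ofReal_one, one_pow, one_mul, ENNReal.toReal_ofReal Real.pi_pos.le, two_nsmul]
  ring

lemma integrable_bubble_sq : Integrable fun z => bubble z ^ 2 :=
  integrable_bubble.mono' (continuous_bubble.pow 2).aestronglyMeasurable <| .of_forall fun z => by
    rw [Real.norm_of_nonneg (by positivity)]
    exact (le_add_of_nonneg_right (by positivity)).trans_eq (bubble_sq_add z)

lemma integrable_bubble_sq_mul : Integrable fun z => bubble z ^ 2 * ‖z‖ ^ 4 :=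
  (integrable_bubble.sub integrable_bubble_sq).congr <| .of_forall fun z =>
    sub_eq_of_eq_add' (bubble_sq_add z).symm

end Bubble

/- With `S = f²` and `J = |∇f|^(4/3)` this is the sharp Sobolev inequality
`‖f‖₄ ≤ π⁻¹‖∇f‖_{4/3}`. -/
lemma pi_pow_four_mul_integral_sq_le {S J : ℝ² → ℝ} (hS : ContDiff ℝ 1 S)
    (hSc : HasCompactSupport S) (hS0 : ∀ z, 0 ≤ S z) (hJ : Continuous J) (hJ0 : ∀ z, 0 ≤ J z)
    (hJint : Integrable J)
    (hle : ∀ z, (pd S 0 z ^ 2 + pd S 1 z ^ 2) ^ 2 ≤ 16 * S z ^ 2 * J z ^ 3) :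
    Real.pi ^ 4 * ∫ z, S z ^ 2 ≤ (∫ z, J z) ^ 3 := by
  have hdual := integral_sq_mul_integral_pow_four_le_of_integrable hS hSc hS0 hJ hJ0 hJint hle
    continuous_bubble bubble_pos integrable_bubble integrable_bubble_sq integrable_bubble_sq_mul
  have hsum : (∫ z, bubble z ^ 2) + ∫ z, bubble z ^ 2 * ‖z‖ ^ 4 = Real.pi ^ 2 / 2 := by
    rw [← integral_add integrable_bubble_sq integrable_bubble_sq_mul, ← integral_bubble]
    simp only [bubble_sq_add]
  rw [integral_bubble] at hdual
  have hprod := four_mul_le_sq_add (∫ z, bubble z ^ 2) (∫ z, bubble z ^ 2 * ‖z‖ ^ 4)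
  rw [hsum] at hprod
  have hJ3 : 0 ≤ (∫ z, J z) ^ 3 := pow_nonneg (integral_nonneg hJ0) 3
  refine le_of_mul_le_mul_right ?_ (show 0 < Real.pi ^ 4 / 16 by positivity)
  linear_combination hdual + (∫ z, J z) ^ 3 * hprod / 4

section PartialDerivatives

variable {v w φ : ℝ² → ℝ} {z : ℝ²}

lemma contDiff_pd {m n : WithTop ℕ∞} (hw : ContDiff ℝ n w) (hmn : m + 1 ≤ n) (i : Fin 2) :
    ContDiff ℝ m (pd w i) :=
  (hw.fderiv_right hmn).clm_apply contDiff_const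

lemma tsupport_pd_subset (w : ℝ² → ℝ) (i : Fin 2) : tsupport (pd w i) ⊆ tsupport w :=
  tsupport_fderiv_apply_subset ℝ _

lemma pd_sub (hv : DifferentiableAt ℝ v z) (hw : DifferentiableAt ℝ w z) (i : Fin 2) :
    pd (fun y => v y - w y) i z = pd v i z - pd w i z := by
  simp only [pd, fderiv_fun_sub hv hw, sub_apply]

lemma lap_sub (hv : ContDiff ℝ 2 v) (hw : ContDiff ℝ 2 w) (z : ℝ²) :
    lap (fun y => v y - w y) z = lap v z - lap w z := by
  have hpd i : pd (fun y => v y - w y) i = fun y => pd v i y - pd w i y := funext fun y =>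
    pd_sub (hv.differentiable two_ne_zero y) (hw.differentiable two_ne_zero y) i
  have hpd2 i : pd2 (fun y => v y - w y) i i z = pd2 v i i z - pd2 w i i z := by
    simp only [pd2, hpd]
    exact pd_sub ((contDiff_pd hv one_add_one_eq_two.le i).differentiable one_ne_zero z)
      ((contDiff_pd hw one_add_one_eq_two.le i).differentiable one_ne_zero z) i
  simp only [lap, hpd2]
  ring

lemma pd2_comm (hw : ContDiff ℝ 2 w) (i j : Fin 2) (z : ℝ²) : pd2 w i j z = pd2 w j i z := by
  have hd : DifferentiableAt ℝ (fderiv ℝ w) z :=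
    (hw.fderiv_right one_add_one_eq_two.le).differentiable one_ne_zero z
  have hpd2 i j : pd2 w i j z =
      fderiv ℝ (fderiv ℝ w) z (EuclideanSpace.single i 1) (EuclideanSpace.single j 1) := by
    simp only [pd2, pd]
    rw [fderiv_clm_apply hd (differentiableAt_const _)]
    simp
  rw [hpd2, hpd2, hw.contDiffAt.isSymmSndFDerivAt (by simp)]

lemma hess2_nonneg (w : ℝ² → ℝ) (z : ℝ²) : 0 ≤ hess2 w z :=
  Finset.sum_nonneg fun _ _ => Finset.sum_nonneg fun _ _ => sq_nonneg _

lemma hess2_eq (hw : ContDiff ℝ 2 w) (z : ℝ²) :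
    hess2 w z = pd2 w 0 0 z ^ 2 + 2 * pd2 w 0 1 z ^ 2 + pd2 w 1 1 z ^ 2 := by
  simp only [hess2, Fin.sum_univ_two, pd2_comm hw 1 0]
  ring

/-- The squared length `|∇w|²` of the gradient. -/
def gradSq (w : ℝ² → ℝ) (z : ℝ²) : ℝ := pd w 0 z ^ 2 + pd w 1 z ^ 2

lemma gradSq_nonneg (w : ℝ² → ℝ) (z : ℝ²) : 0 ≤ gradSq w z :=
  add_nonneg (sq_nonneg _) (sq_nonneg _)

lemma pd_gradSq (hw : ContDiff ℝ 2 w) (i : Fin 2) (z : ℝ²) :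
    pd (gradSq w) i z = 2 * (pd w 0 z * pd2 w i 0 z + pd w 1 z * pd2 w i 1 z) := by
  have hd j : HasFDerivAt (pd w j) (fderiv ℝ (pd w j) z) z :=
    ((contDiff_pd hw one_add_one_eq_two.le j).differentiable one_ne_zero z).hasFDerivAt
  have hgrad : HasFDerivAt (gradSq w) _ z := ((hd 0).pow 2).add ((hd 1).pow 2)
  rw [pd, hgrad.fderiv]
  simp [pd2]
  ring

lemma gradSq_gradSq_le (hw : ContDiff ℝ 2 w) (z : ℝ²) :
    gradSq (gradSq w) z ≤ 4 * gradSq w z * hess2 w z := by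
  rw [gradSq, pd_gradSq hw, pd_gradSq hw, hess2_eq hw, pd2_comm hw 1 0, gradSq]
  linear_combination 4 * sq_nonneg (pd w 0 z * pd2 w 0 1 z - pd w 1 z * pd2 w 0 0 z) +
    4 * sq_nonneg (pd w 0 z * pd2 w 1 1 z - pd w 1 z * pd2 w 0 1 z)

/-- The expression `curl w · ∇φ` in the trilinear form `Gam`. -/
def curlDotGrad (w φ : ℝ² → ℝ) (z : ℝ²) : ℝ := pd w 1 z * pd φ 0 z - pd w 0 z * pd φ 1 z

lemma Gam_eq (Ω : Set ℝ²) (v w φ : ℝ² → ℝ) :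
    Gam Ω v w φ = ∫ z in Ω, lap v z * curlDotGrad w φ z := rfl

lemma curlDotGrad_sq_le (w φ : ℝ² → ℝ) (z : ℝ²) :
    curlDotGrad w φ z ^ 2 ≤ gradSq w z * gradSq φ z := by
  simp only [curlDotGrad, gradSq]
  linear_combination sq_nonneg (pd w 1 z * pd φ 1 z + pd w 0 z * pd φ 0 z)

lemma curlDotGrad_sub (hv : DifferentiableAt ℝ v z) (hw : DifferentiableAt ℝ w z) :
    curlDotGrad (fun y => v y - w y) φ z = curlDotGrad v φ z - curlDotGrad w φ z := by
  simp only [curlDotGrad, pd_sub hv hw]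
  ring

end PartialDerivatives

namespace IsTest

variable {Ω : Set ℝ²} {v w φ : ℝ² → ℝ}

protected lemma contDiff (hw : IsTest Ω w) {n : ℕ∞} : ContDiff ℝ n w :=
  hw.1.of_le (mod_cast le_top)

protected lemma contDiff_two (hw : IsTest Ω w) : ContDiff ℝ 2 w := hw.contDiff (n := 2)

protected lemma continuous (hw : IsTest Ω w) : Continuous w := hw.1.continuous

protected lemma differentiableAt (hw : IsTest Ω w) {z : ℝ²} : DifferentiableAt ℝ w z :=
  hw.1.differentiable (by simp) z

protected lemma integrable (hw : IsTest Ω w) : Integrable w :=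
  hw.continuous.integrable_of_hasCompactSupport hw.2.1

lemma eq_zero_of_notMem (hw : IsTest Ω w) {z : ℝ²} (hz : z ∉ Ω) : w z = 0 :=
  image_eq_zero_of_notMem_tsupport fun h => hz (hw.2.2 h)

lemma setIntegral_eq (hw : IsTest Ω w) : ∫ z in Ω, w z = ∫ z, w z :=
  setIntegral_eq_integral_of_forall_compl_eq_zero fun _ => hw.eq_zero_of_notMem

protected lemma add (hv : IsTest Ω v) (hw : IsTest Ω w) : IsTest Ω fun z => v z + w z :=
  ⟨hv.1.add hw.1, hv.2.1.add hw.2.1, (tsupport_add v w).trans (Set.union_subset hv.2.2 hw.2.2)⟩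

protected lemma sub (hv : IsTest Ω v) (hw : IsTest Ω w) : IsTest Ω fun z => v z - w z :=
  ⟨hv.1.sub hw.1, hv.2.1.sub hw.2.1, (tsupport_sub v w).trans (Set.union_subset hv.2.2 hw.2.2)⟩

protected lemma mul (hv : IsTest Ω v) (hw : IsTest Ω w) : IsTest Ω fun z => v z * w z :=
  ⟨hv.1.mul hw.1, hv.2.1.mul_right, tsupport_mul_subset_left.trans hv.2.2⟩

protected lemma sq (hw : IsTest Ω w) : IsTest Ω fun z => w z ^ 2 := by
  simpa only [sq] using hw.mul hw

protected lemma pd (hw : IsTest Ω w) (i : Fin 2) : IsTest Ω (pd w i) :=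
  ⟨contDiff_pd hw.1 (by norm_cast) i,
    hw.2.1.mono' ((subset_tsupport _).trans (tsupport_pd_subset w i)),
    (tsupport_pd_subset w i).trans hw.2.2⟩

protected lemma pd2 (hw : IsTest Ω w) (i j : Fin 2) : IsTest Ω (pd2 w i j) := (hw.pd j).pd i

protected lemma lap (hw : IsTest Ω w) : IsTest Ω (lap w) := (hw.pd2 0 0).add (hw.pd2 1 1)

protected lemma hess2 (hw : IsTest Ω w) : IsTest Ω (hess2 w) := by
  unfold _root_.hess2
  simp only [Fin.sum_univ_two]
  exact ((hw.pd2 0 0).sq.add (hw.pd2 0 1).sq).add ((hw.pd2 1 0).sq.add (hw.pd2 1 1).sq)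

protected lemma gradSq (hw : IsTest Ω w) : IsTest Ω (gradSq w) := (hw.pd 0).sq.add (hw.pd 1).sq

protected lemma curlDotGrad (hw : IsTest Ω w) (hφ : IsTest Ω φ) : IsTest Ω (curlDotGrad w φ) :=
  ((hw.pd 1).mul (hφ.pd 0)).sub ((hw.pd 0).mul (hφ.pd 1))

lemma integral_pd_mul (hv : IsTest Ω v) (hw : IsTest Ω w) (i : Fin 2) :
    ∫ z, pd v i z * w z = -∫ z, v z * pd w i z := by
  rw [eq_neg_iff_add_eq_zero, add_comm, ← eq_neg_iff_add_eq_zero]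
  exact integral_mul_fderiv_eq_neg_fderiv_mul_of_integrable ((hv.pd i).mul hw).integrable
    (hv.mul (hw.pd i)).integrable (hv.mul hw).integrable (fun _ _ => hv.differentiableAt)
    (fun _ _ => hw.differentiableAt)

lemma integral_pd_mul_pd_comm (hv : IsTest Ω v) (hw : IsTest Ω w) (i j : Fin 2) :
    ∫ z, pd v i z * pd w j z = ∫ z, pd v j z * pd w i z := by
  rw [hv.integral_pd_mul (hw.pd j), hv.integral_pd_mul (hw.pd i)]
  congr! 4 with z
  exact pd2_comm hw.contDiff_two i j z

lemma integral_lap_sq (hw : IsTest Ω w) : ∫ z, lap w z ^ 2 = ∫ z, hess2 w z := by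
  have hdet : ∫ z, (pd2 w 0 0 z * pd2 w 1 1 z - pd2 w 0 1 z ^ 2) = 0 := by
    have hmixed : ∫ z, pd2 w 0 1 z ^ 2 = ∫ z, pd2 w 1 0 z * pd2 w 0 1 z := by
      simp only [sq, pd2_comm hw.contDiff_two 1 0]
    rw [integral_sub ((hw.pd2 0 0).mul (hw.pd2 1 1)).integrable (hw.pd2 0 1).sq.integrable,
      hmixed, sub_eq_zero]
    exact (hw.pd 0).integral_pd_mul_pd_comm (hw.pd 1) 0 1
  have hlap z : lap w z ^ 2 =
      hess2 w z + 2 * (pd2 w 0 0 z * pd2 w 1 1 z - pd2 w 0 1 z ^ 2) := by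
    rw [hess2_eq hw.contDiff_two, _root_.lap]
    ring
  simp only [hlap]
  rw [integral_add hw.hess2.integrable, integral_const_mul, hdet, mul_zero, add_zero]
  exact (((hw.pd2 0 0).mul (hw.pd2 1 1)).sub (hw.pd2 0 1).sq).integrable.const_mul 2

end IsTest

section TrilinearForm

variable {Ω : Set ℝ²} {v w φ ψ : ℝ² → ℝ}

lemma pi_pow_four_mul_integral_gradSq_sq_le (hw : IsTest Ω w) :
    Real.pi ^ 4 * ∫ z, gradSq w z ^ 2 ≤ (∫ z, hess2 w z ^ (2 / 3 : ℝ)) ^ 3 := by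
  have hcont : Continuous fun z => hess2 w z ^ (2 / 3 : ℝ) :=
    hw.hess2.continuous.rpow_const fun _ => .inr (by norm_num)
  have hsupp : HasCompactSupport fun z => hess2 w z ^ (2 / 3 : ℝ) :=
    hw.hess2.2.1.mono fun z hz hz0 => hz (by simp [hz0])
  refine pi_pow_four_mul_integral_sq_le hw.gradSq.contDiff hw.gradSq.2.1 (gradSq_nonneg w) hcont
    (fun z => Real.rpow_nonneg (hess2_nonneg w z) _) (hcont.integrable_of_hasCompactSupport hsupp)
    fun z => ?_
  have hcube : (hess2 w z ^ (2 / 3 : ℝ)) ^ 3 = hess2 w z ^ 2 := by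
    rw [← Real.rpow_mul_natCast (hess2_nonneg w z), ← Real.rpow_natCast]
    norm_num
  calc gradSq (gradSq w) z ^ 2
      ≤ (4 * gradSq w z * hess2 w z) ^ 2 :=
        pow_le_pow_left₀ (gradSq_nonneg _ z) (gradSq_gradSq_le hw.contDiff_two z) 2
    _ = 16 * gradSq w z ^ 2 * (hess2 w z ^ (2 / 3 : ℝ)) ^ 3 := by rw [hcube]; ring

lemma sqrt_integral_gradSq_sq_le (hΩ : volume Ω ≠ ⊤) (hw : IsTest Ω w) :
    √(∫ z in Ω, gradSq w z ^ 2) ≤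
      √(volume Ω).toReal / Real.pi ^ 2 * ∫ z in Ω, hess2 w z := by
  have : IsFiniteMeasure (volume.restrict Ω) := isFiniteMeasure_restrict.2 hΩ
  have hh0 : 0 ≤ ∫ z in Ω, hess2 w z := integral_nonneg (hess2_nonneg w)
  have hholder : ∫ z, hess2 w z ^ (2 / 3 : ℝ) ≤
      (∫ z in Ω, hess2 w z) ^ (2 / 3 : ℝ) * (volume Ω).toReal ^ (1 - 2 / 3 : ℝ) := by
    rw [← setIntegral_eq_integral_of_forall_compl_eq_zero (s := Ω) fun z hz => by
      rw [hw.hess2.eq_zero_of_notMem hz, Real.zero_rpow (by norm_num)]]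
    simpa only [Measure.restrict_apply_univ, Measure.real] using integral_rpow_le
      (μ := volume.restrict Ω) hw.hess2.integrable.restrict (hess2_nonneg w) (s := 2 / 3)
      (by norm_num) (by norm_num)
  have hcube : ((∫ z in Ω, hess2 w z) ^ (2 / 3 : ℝ) * (volume Ω).toReal ^ (1 - 2 / 3 : ℝ)) ^ 3 =
      (∫ z in Ω, hess2 w z) ^ 2 * (volume Ω).toReal := by
    rw [mul_pow, ← Real.rpow_mul_natCast hh0, ← Real.rpow_mul_natCast ENNReal.toReal_nonneg,
      ← Real.rpow_natCast]
    norm_num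
  refine Real.sqrt_le_iff.2 ⟨by positivity, ?_⟩
  rw [mul_pow, div_pow, Real.sq_sqrt ENNReal.toReal_nonneg, ← pow_mul, div_mul_eq_mul_div,
    le_div_iff₀' (by positivity), hw.gradSq.sq.setIntegral_eq]
  calc Real.pi ^ 4 * ∫ z, gradSq w z ^ 2
      ≤ (∫ z, hess2 w z ^ (2 / 3 : ℝ)) ^ 3 := pi_pow_four_mul_integral_gradSq_sq_le hw
    _ ≤ ((∫ z in Ω, hess2 w z) ^ (2 / 3 : ℝ) * (volume Ω).toReal ^ (1 - 2 / 3 : ℝ)) ^ 3 :=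
        pow_le_pow_left₀ (integral_nonneg fun z => Real.rpow_nonneg (hess2_nonneg w z) _) hholder 3
    _ = (volume Ω).toReal * (∫ z in Ω, hess2 w z) ^ 2 := by rw [hcube, mul_comm]

lemma abs_Gam_le (hΩ : volume Ω ≠ ⊤) (hv : IsTest Ω v) (hw : IsTest Ω w) (hφ : IsTest Ω φ) :
    |Gam Ω v w φ| ≤ √(volume Ω).toReal / Real.pi ^ 2 *
      (√(∫ z in Ω, hess2 v z) * √(∫ z in Ω, hess2 w z) * √(∫ z in Ω, hess2 φ z)) := by
  have hlap : ∫ z in Ω, lap v z ^ 2 = ∫ z in Ω, hess2 v z := by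
    rw [hv.lap.sq.setIntegral_eq, hv.integral_lap_sq, hv.hess2.setIntegral_eq]
  have hcurl : ∫ z in Ω, curlDotGrad w φ z ^ 2 ≤ (√(volume Ω).toReal / Real.pi ^ 2) ^ 2 *
      ((∫ z in Ω, hess2 w z) * ∫ z in Ω, hess2 φ z) := by
    calc ∫ z in Ω, curlDotGrad w φ z ^ 2
        ≤ ∫ z in Ω, gradSq w z * gradSq φ z :=
          integral_mono (hw.curlDotGrad hφ).sq.integrable.restrict
            (hw.gradSq.mul hφ.gradSq).integrable.restrict (curlDotGrad_sq_le w φ)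
      _ ≤ √(∫ z in Ω, gradSq w z ^ 2) * √(∫ z in Ω, gradSq φ z ^ 2) :=
          (le_abs_self _).trans (abs_integral_mul_le_sqrt_mul_sqrt
            hw.gradSq.sq.integrable.restrict hφ.gradSq.sq.integrable.restrict)
      _ ≤ (√(volume Ω).toReal / Real.pi ^ 2 * ∫ z in Ω, hess2 w z) *
            (√(volume Ω).toReal / Real.pi ^ 2 * ∫ z in Ω, hess2 φ z) := by
          have hw0 : 0 ≤ ∫ z in Ω, hess2 w z := integral_nonneg (hess2_nonneg w)
          gcongr <;> exact sqrt_integral_gradSq_sq_le hΩ ‹_›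
      _ = _ := by ring
  calc |Gam Ω v w φ|
      ≤ √(∫ z in Ω, lap v z ^ 2) * √(∫ z in Ω, curlDotGrad w φ z ^ 2) :=
        abs_integral_mul_le_sqrt_mul_sqrt hv.lap.sq.integrable.restrict
          (hw.curlDotGrad hφ).sq.integrable.restrict
    _ ≤ √(∫ z in Ω, hess2 v z) * (√(volume Ω).toReal / Real.pi ^ 2 *
          (√(∫ z in Ω, hess2 w z) * √(∫ z in Ω, hess2 φ z))) := by
        rw [hlap, ← Real.sqrt_mul (integral_nonneg (hess2_nonneg w))]
        gcongr
        refine (Real.sqrt_le_sqrt hcurl).trans_eq ?_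
        rw [Real.sqrt_mul (sq_nonneg _), Real.sqrt_sq (by positivity)]
    _ = _ := by ring

lemma Gam_sub_left (hv : IsTest Ω v) (hw : IsTest Ω w) (hφ : IsTest Ω φ) (hψ : IsTest Ω ψ) :
    Gam Ω (fun y => v y - w y) φ ψ = Gam Ω v φ ψ - Gam Ω w φ ψ := by
  simp only [Gam_eq, lap_sub hv.contDiff_two hw.contDiff_two, sub_mul]
  exact integral_sub (hv.lap.mul (hφ.curlDotGrad hψ)).integrable.restrict
    (hw.lap.mul (hφ.curlDotGrad hψ)).integrable.restrict

lemma Gam_sub_middle (hφ : IsTest Ω φ) (hv : IsTest Ω v) (hw : IsTest Ω w) (hψ : IsTest Ω ψ) :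
    Gam Ω φ (fun y => v y - w y) ψ = Gam Ω φ v ψ - Gam Ω φ w ψ := by
  simp only [Gam_eq, curlDotGrad_sub hv.differentiableAt hw.differentiableAt, mul_sub]
  exact integral_sub (hφ.lap.mul (hv.curlDotGrad hψ)).integrable.restrict
    (hφ.lap.mul (hw.curlDotGrad hψ)).integrable.restrict

end TrilinearForm

theorem DG_lipschitz_general (Ω : Set ℝ²) (hΩ : volume Ω ≠ ⊤) (v w φ ψ : ℝ² → ℝ)
    (hv : IsTest Ω v) (hw : IsTest Ω w) (hφ : IsTest Ω φ) (hψ : IsTest Ω ψ) :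
    |(Gam Ω v φ ψ + Gam Ω φ v ψ) - (Gam Ω w φ ψ + Gam Ω φ w ψ)| ≤
      2 * √(volume Ω).toReal / Real.pi ^ 2 *
        (√(∫ x in Ω, hess2 (fun y => v y - w y) x) *
          √(∫ x in Ω, hess2 φ x) * √(∫ x in Ω, hess2 ψ x)) := by
  rw [add_sub_add_comm, ← Gam_sub_left hv hw hφ hψ, ← Gam_sub_middle hφ hv hw hψ]
  have hleft := abs_Gam_le hΩ (hv.sub hw) hφ hψ
  have hmiddle := abs_Gam_le hΩ hφ (hv.sub hw) hψ
  refine (abs_add_le _ _).trans ((add_le_add hleft hmiddle).trans_eq ?_)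
  ring

/-- Lipschitz continuity of the Fréchet derivative `DG(v) = Γ(v,·,·) + Γ(·,v,·)` of the
quadratic semilinearity `G(v) = Γ(v,v)`, with constant `2|Ω|^{1/2}/π²` in the `H²` seminorm. -/
theorem DG_lipschitz (Ω : Set (EuclideanSpace ℝ (Fin 2))) (hΩ : IsOpen Ω)
    (hbdd : Bornology.IsBounded Ω)
    (v w φ ψ : EuclideanSpace ℝ (Fin 2) → ℝ)
    (hv : IsTest Ω v) (hw : IsTest Ω w) (hφ : IsTest Ω φ) (hψ : IsTest Ω ψ) :
    |(Gam Ω v φ ψ + Gam Ω φ v ψ) - (Gam Ω w φ ψ + Gam Ω φ w ψ)| ≤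
      2 * Real.sqrt (volume Ω).toReal / Real.pi ^ 2 *
        (Real.sqrt (∫ x in Ω, hess2 (fun y => v y - w y) x) *
          Real.sqrt (∫ x in Ω, hess2 φ x) * Real.sqrt (∫ x in Ω, hess2 ψ x)) :=
  DG_lipschitz_general Ω hbdd.measure_lt_top.ne v w φ ψ hv hw hφ hψ

end
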